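/- arXiv:1504.07661 — 9 statements merged into one kernel-verified Lean document; each statement's English description precedes it below -/
import Mathlib

section
/- Let p ∈ ℤ², let q ∈ Q¹_p, and let ≺ be a linear order on ℤ. Then the digital segment R(≺,p,q) contains p and q, contains exactly one point r_c with r_c.x + r_c.y = c for each integer c ∈ [p.x+p.y, q.x+q.y], and for each such c < q.x+q.y the point r_{c+1} equals r_c + (1,0) or r_c + (0,1) (so R(≺,p,q) is the vertex set of a monotone path from p to q in the unit grid graph with exactly q.x−p.x horizontal steps and q.y−p.y vertical steps). -/
open scoped Classical

/-- Points of the digital plane. -/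
abbrev Pt : Type := ℤ × ℤ

/-- `q` lies in the closed first quadrant of `p`. -/
def Quad1 (p q : Pt) : Prop := p.1 ≤ q.1 ∧ p.2 ≤ q.2

/-- The number of elements `y` of the finite set `J` with `y ≺ x` or `y = x`. -/
noncomputable def rankLE (lt : ℤ → ℤ → Prop) (J : Finset ℤ) (x : ℤ) : ℤ :=
  ((J.filter fun y => lt y x ∨ y = x).card : ℤ)

/-- `x` is among the `k` smallest elements of `J` with respect to the linear order `lt`. -/
def AmongSmallest (lt : ℤ → ℤ → Prop) (J : Finset ℤ) (k x : ℤ) : Prop :=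
  x ∈ J ∧ rankLE lt J x ≤ k

/-- The interval `I(p,q) = [p.x+p.y, q.x+q.y-1]`. -/
noncomputable def Ival (p q : Pt) : Finset ℤ := Finset.Icc (p.1 + p.2) (q.1 + q.2 - 1)

/-- Membership in `H(lt,p,q)`: the `q.x - p.x` smallest elements of `I(p,q)` w.r.t. `lt`. -/
def Hmem (lt : ℤ → ℤ → Prop) (p q : Pt) (a : ℤ) : Prop :=
  AmongSmallest lt (Ival p q) (q.1 - p.1) a

/-- The digital segment `R(lt,p,q)` for `q ∈ Q¹_p`, generated by the linear order `lt`. -/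
noncomputable def seg (lt : ℤ → ℤ → Prop) (p q : Pt) : Set Pt :=
  {r : Pt | p.1 ≤ r.1 ∧ r.1 ≤ q.1 ∧ p.2 ≤ r.2 ∧ r.2 ≤ q.2 ∧
    p.1 + p.2 ≤ r.1 + r.2 ∧ r.1 + r.2 ≤ q.1 + q.2 ∧
    r.1 - p.1 =
      (((Finset.Icc (p.1 + p.2) (r.1 + r.2 - 1)).filter fun a => Hmem lt p q a).card : ℤ)}

/-- `(t₁,t₂)` is a witness to the violation of (S3) for the pair of sets `(S,S')`. -/
def Witness (S S' : Set Pt) (t₁ t₂ : Pt) : Prop :=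
  t₁ ∈ S ∧ t₁ ∈ S' ∧ t₂ ∈ S ∧ t₂ ∈ S' ∧
  t₁.1 + t₁.2 < t₂.1 + t₂.2 ∧
  ((t₁.1 + 1, t₁.2) : Pt) ∈ S ∧ ((t₁.1, t₁.2 + 1) : Pt) ∈ S' ∧
  ((t₂.1, t₂.2 - 1) : Pt) ∈ S ∧ ((t₂.1 - 1, t₂.2) : Pt) ∈ S'

/-- `a ≠ b` form a bad pair for `(lt,p)` and `(lt',p')`, where `p.x ≤ p'.x`. -/
def BadPair (lt lt' : ℤ → ℤ → Prop) (p p' : Pt) (a b : ℤ) : Prop :=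
  a ≠ b ∧ ∃ C ℓ : ℤ, p.1 + p.2 ≤ C ∧ p'.1 + p'.2 ≤ C ∧
    a ∈ Finset.Icc (p.1 + p.2) (C - 1) ∧ b ∈ Finset.Icc (p.1 + p.2) (C - 1) ∧
    a ∈ Finset.Icc (p'.1 + p'.2) (C - 1) ∧ b ∈ Finset.Icc (p'.1 + p'.2) (C - 1) ∧
    AmongSmallest lt (Finset.Icc (p.1 + p.2) (C - 1)) ℓ a ∧
    ¬ AmongSmallest lt (Finset.Icc (p.1 + p.2) (C - 1)) ℓ b ∧
    AmongSmallest lt' (Finset.Icc (p'.1 + p'.2) (C - 1)) (ℓ - (p'.1 - p.1)) b ∧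
    ¬ AmongSmallest lt' (Finset.Icc (p'.1 + p'.2) (C - 1)) (ℓ - (p'.1 - p.1)) a

/-- Bad pair for arbitrary `p, p'`: for `p.x > p'.x` the roles of `p` and `p'` are exchanged. -/
def BadPairSym (lt lt' : ℤ → ℤ → Prop) (p p' : Pt) (a b : ℤ) : Prop :=
  (p.1 ≤ p'.1 ∧ BadPair lt lt' p p' a b) ∨ (p'.1 ≤ p.1 ∧ BadPair lt' lt p' p a b)

/-- Adjacency in the unit grid graph on `ℤ²`. -/
def GridAdj (u v : Pt) : Prop := |u.1 - v.1| + |u.2 - v.2| = 1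

/-- `S` is the vertex set of a path from `p` to `q` in the unit grid graph. -/
def IsGridPath (S : Set Pt) (p q : Pt) : Prop :=
  ∃ (n : ℕ) (f : ℕ → Pt), f 0 = p ∧ f n = q ∧
    (∀ i, i < n → GridAdj (f i) (f (i + 1))) ∧
    (∀ i j, i ≤ n → j ≤ n → f i = f j → i = j) ∧
    S = {r : Pt | ∃ i, i ≤ n ∧ f i = r}

/-- The pair `p, q` has nonnegative slope. -/
def NonnegPair (p q : Pt) : Prop := (p.1 ≤ q.1 ∧ p.2 ≤ q.2) ∨ (q.1 ≤ p.1 ∧ q.2 ≤ p.2)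

/-- A nonnegative-slope digital segment system `R` is a CDS: properties (S1)-(S5). -/
def IsCDS (R : Pt → Pt → Set Pt) : Prop :=
  ∀ p q : Pt, NonnegPair p q →
    IsGridPath (R p q) p q ∧
    R p q = R q p ∧
    (∀ r s : Pt, r ∈ R p q → s ∈ R p q → NonnegPair r s → R r s ⊆ R p q) ∧
    (∃ r : Pt, r ∉ R p q ∧ NonnegPair p r ∧ R p q ⊆ R p r) ∧
    (p.1 = q.1 → ∀ r ∈ R p q, r.1 = p.1) ∧
    (p.2 = q.2 → ∀ r ∈ R p q, r.2 = p.2)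

/-- The nonnegative-slope digital segment system generated by an assignment of
linear orders to the points of `ℤ²`. -/
noncomputable def genR (ord : Pt → ℤ → ℤ → Prop) (p q : Pt) : Set Pt :=
  if p.1 ≤ q.1 ∧ p.2 ≤ q.2 then seg (ord p) p q else seg (ord q) q p

/-- The orders `lt` at `p` and `lt'` at `p'` are in agreement. -/
def Agree (p p' : Pt) (lt lt' : ℤ → ℤ → Prop) : Prop :=
  ∀ a b : ℤ, max p.1 p'.1 + max p.2 p'.2 ≤ a → max p.1 p'.1 + max p.2 p'.2 ≤ b →
    (lt a b ↔ lt' a b)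

/-- Two digital segments are smooth: the antidiagonal distance function is
monotonically nondecreasing or nonincreasing on its domain. -/
def SmoothPair (S S' : Set Pt) : Prop :=
  (∀ r₁ s₁ r₂ s₂ : Pt, r₁ ∈ S → s₁ ∈ S' → r₂ ∈ S → s₂ ∈ S' →
      r₁.1 + r₁.2 = s₁.1 + s₁.2 → r₂.1 + r₂.2 = s₂.1 + s₂.2 →
      r₁.1 + r₁.2 ≤ r₂.1 + r₂.2 → r₁.1 - s₁.1 ≤ r₂.1 - s₂.1) ∨
  (∀ r₁ s₁ r₂ s₂ : Pt, r₁ ∈ S → s₁ ∈ S' → r₂ ∈ S → s₂ ∈ S' →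
      r₁.1 + r₁.2 = s₁.1 + s₁.2 → r₂.1 + r₂.2 = s₂.1 + s₂.2 →
      r₁.1 + r₁.2 ≤ r₂.1 + r₂.2 → r₂.1 - s₂.1 ≤ r₁.1 - s₁.1)

/-- The waterline assignment of linear orders. -/
def waterOrd (p : Pt) : ℤ → ℤ → Prop := fun a b =>
  if 0 ≤ p.2 then a < b
  else (p.1 ≤ a ∧ p.1 ≤ b ∧ a < b) ∨ (p.1 ≤ a ∧ b < p.1) ∨ (a < p.1 ∧ b < p.1 ∧ b < a)

/-- `p₃` has a conflicting priority with respect to `(lt,p)` and `(lt',p')`. -/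
def ConflictPriority (lt lt' : ℤ → ℤ → Prop) (p p' p₃ : Pt) : Prop :=
  ∃ a b : ℤ, a ∈ Ival p p₃ ∧ a ∈ Ival p' p₃ ∧ b ∈ Ival p p₃ ∧ b ∈ Ival p' p₃ ∧
    Hmem lt p p₃ b ∧ ¬ Hmem lt p p₃ a ∧ Hmem lt' p' p₃ a ∧ ¬ Hmem lt' p' p₃ b

lemma rank_strict (lt : ℤ → ℤ → Prop) [IsStrictTotalOrder ℤ lt] (J : Finset ℤ) {a b : ℤ}
    (hb : b ∈ J) (h : lt a b) : rankLE lt J a < rankLE lt J b := by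
  unfold rankLE
  have : (J.filter fun y => lt y a ∨ y = a) ⊂ (J.filter fun y => lt y b ∨ y = b) := by
    rw [Finset.ssubset_iff_of_subset]
    · refine ⟨b, by simp [hb], ?_⟩
      simp only [Finset.mem_filter, not_and, not_or]
      refine fun _ => ⟨fun h' => irrefl_of lt a (trans_of lt h h'), ?_⟩
      rintro rfl
      exact irrefl_of lt _ h
    · intro y hy
      simp only [Finset.mem_filter] at hy ⊢
      refine ⟨hy.1, Or.inl ?_⟩
      rcases hy.2 with h' | rfl
      · exact trans_of lt h' h
      · exact h
  exact_mod_cast Finset.card_lt_card this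

lemma card_smallest (lt : ℤ → ℤ → Prop) [IsStrictTotalOrder ℤ lt] (J : Finset ℤ) (k : ℤ)
    (hk : 0 ≤ k) (hkJ : k ≤ J.card) :
    ((J.filter fun x => AmongSmallest lt J k x).card : ℤ) = k := by
  have hinj : Set.InjOn (rankLE lt J) (J : Set ℤ) := by
    intro a ha b hb hab
    rcases trichotomous_of lt a b with h | h | h
    · have := rank_strict lt J (Finset.mem_coe.1 hb) h
      omega
    · exact h
    · have := rank_strict lt J (Finset.mem_coe.1 ha) h
      omega
  have himg : J.image (rankLE lt J) = Finset.Icc 1 (J.card : ℤ) := by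
    apply Finset.eq_of_subset_of_card_le
    · intro y hy
      obtain ⟨x, hx, rfl⟩ := Finset.mem_image.1 hy
      rw [Finset.mem_Icc]
      unfold rankLE
      constructor
      · have : 0 < (J.filter fun y => lt y x ∨ y = x).card :=
          Finset.card_pos.2 ⟨x, by simp [hx]⟩
        omega
      · exact_mod_cast Finset.card_filter_le _ _
    · rw [Finset.card_image_of_injOn hinj]
      simp
  have h2 : (J.filter fun x => AmongSmallest lt J k x).image (rankLE lt J) = Finset.Icc 1 k := by
    ext y
    simp only [Finset.mem_image, Finset.mem_filter]
    constructor
    · rintro ⟨x, ⟨hx, _, hxk⟩, rfl⟩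
      have := Finset.mem_image_of_mem (rankLE lt J) hx
      rw [himg, Finset.mem_Icc] at this
      exact Finset.mem_Icc.2 ⟨this.1, hxk⟩
    · intro hy
      rw [Finset.mem_Icc] at hy
      have : y ∈ J.image (rankLE lt J) := by
        rw [himg, Finset.mem_Icc]
        omega
      obtain ⟨x, hx, rfl⟩ := Finset.mem_image.1 this
      exact ⟨x, ⟨hx, hx, hy.2⟩, rfl⟩
  have h3 := Finset.card_image_of_injOn
    (s := J.filter fun x => AmongSmallest lt J k x) (f := rankLE lt J)
    (hinj.mono (by intro x hx; simp at hx; exact hx.1))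
  rw [← h3, h2]
  simp [hk]

lemma count_step (P : ℤ → Prop) (a c d : ℤ) (hcd : c ≤ d) :
    (((Finset.Icc a (c - 1)).filter P).card : ℤ) ≤ ((Finset.Icc a (d - 1)).filter P).card ∧
    (((Finset.Icc a (d - 1)).filter P).card : ℤ) ≤
      ((Finset.Icc a (c - 1)).filter P).card + (d - c) := by
  constructor
  · have : (Finset.Icc a (c - 1)).filter P ⊆ (Finset.Icc a (d - 1)).filter P := by
      intro x hx
      simp only [Finset.mem_filter, Finset.mem_Icc] at hx ⊢
      exact ⟨⟨hx.1.1, by omega⟩, hx.2⟩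
    exact_mod_cast Finset.card_le_card this
  · have : (Finset.Icc a (d - 1)).filter P ⊆
        (Finset.Icc a (c - 1)).filter P ∪ Finset.Icc c (d - 1) := by
      intro x hx
      simp only [Finset.mem_filter, Finset.mem_Icc, Finset.mem_union] at hx ⊢
      by_cases h : x ≤ c - 1
      · exact Or.inl ⟨⟨hx.1.1, h⟩, hx.2⟩
      · exact Or.inr (by omega)
    have h1 := (Finset.card_le_card this).trans (Finset.card_union_le _ _)
    have h2 : (Finset.Icc c (d - 1)).card = (d - c).toNat := by simp
    omega

/-- the digital segment `R(≺,p,q)` is a monotone grid path from `p` to `q`: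
it contains `p` and `q`, exactly one point of each coordinate sum `c ∈ [p.x+p.y, q.x+q.y]`,
and consecutive points differ by `(1,0)` or `(0,1)`. -/
theorem statement0 (lt : ℤ → ℤ → Prop) [IsStrictTotalOrder ℤ lt]
    (p q : Pt) (hq : Quad1 p q) :
    p ∈ seg lt p q ∧ q ∈ seg lt p q ∧
    (∀ c : ℤ, p.1 + p.2 ≤ c → c ≤ q.1 + q.2 →
      ∃! r : Pt, r ∈ seg lt p q ∧ r.1 + r.2 = c) ∧
    (∀ r r' : Pt, r ∈ seg lt p q → r' ∈ seg lt p q →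
      p.1 + p.2 ≤ r.1 + r.2 → r.1 + r.2 < q.1 + q.2 → r'.1 + r'.2 = r.1 + r.2 + 1 →
      r' = ((r.1 + 1, r.2) : Pt) ∨ r' = ((r.1, r.2 + 1) : Pt)) := by
  obtain ⟨hx, hy⟩ := hq
  have htot : (((Finset.Icc (p.1 + p.2) (q.1 + q.2 - 1)).filter
      fun a => Hmem lt p q a).card : ℤ) = q.1 - p.1 := by
    refine card_smallest lt (Ival p q) (q.1 - p.1) (by omega) ?_
    simp only [Ival, Int.card_Icc]
    omega
  have hzero : (((Finset.Icc (p.1 + p.2) (p.1 + p.2 - 1)).filter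
      fun a => Hmem lt p q a).card : ℤ) = 0 := by
    simp
  have hstep := count_step (fun a => Hmem lt p q a) (p.1 + p.2)
  refine ⟨⟨le_rfl, hx, le_rfl, hy, le_rfl, by omega, by rw [hzero]; omega⟩,
    ⟨hx, le_rfl, hy, le_rfl, by omega, le_rfl, by rw [htot]⟩, ?_, ?_⟩
  · intro c hc1 hc2
    have s1 := hstep (p.1 + p.2) c hc1
    have s2 := hstep c (q.1 + q.2) hc2
    rw [hzero] at s1
    rw [htot] at s2
    obtain ⟨h, hh⟩ : ∃ h : ℤ, (((Finset.Icc (p.1 + p.2) (c - 1)).filter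
      fun a => Hmem lt p q a).card : ℤ) = h := ⟨_, rfl⟩
    rw [hh] at s1 s2
    refine ⟨(p.1 + h, c - p.1 - h), ⟨⟨?_, ?_, ?_, ?_, ?_, ?_, ?_⟩, ?_⟩, ?_⟩
    · dsimp only; omega
    · dsimp only; omega
    · dsimp only; omega
    · dsimp only; omega
    · dsimp only; omega
    · dsimp only; omega
    · have e : p.1 + h + (c - p.1 - h) = c := by ring
      dsimp only
      rw [e, hh]
      ring
    · dsimp only; omega
    · rintro ⟨u, v⟩ ⟨⟨_, _, _, _, _, _, h7⟩, hs⟩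
      dsimp only at h7 hs
      rw [hs, hh] at h7
      ext <;> dsimp only <;> omega
  · rintro ⟨u, v⟩ ⟨u', v'⟩ ⟨_, _, _, _, _, _, h7⟩ ⟨_, _, _, _, _, _, h7'⟩ _ _ hs
    dsimp only at h7 h7' hs
    have s := hstep (u + v) (u' + v') (by omega)
    rw [← h7, ← h7'] at s
    by_cases hu : u' = u
    · right
      ext <;> dsimp only <;> omega
    · left
      ext <;> dsimp only <;> omega
end

section
/- Let p ∈ ℤ², let ≺ be a linear order on ℤ, and let q, q' ∈ Q¹_p. Then the pair of digital segments (R(≺,p,q), R(≺,p,q')) has no witness to the violation of (S3); that is, there do not exist points t₁, t₂ ∈ R(≺,p,q) ∩ R(≺,p,q') with t₁.x+t₁.y < t₂.x+t₂.y such that (t₁.x+1, t₁.y) ∈ R(≺,p,q), (t₁.x, t₁.y+1) ∈ R(≺,p,q'), (t₂.x, t₂.y−1) ∈ R(≺,p,q), and (t₂.x−1, t₂.y) ∈ R(≺,p,q'). -/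
open scoped Classical

/-- Counting one step further adds the indicator of `Hmem` at the new position. -/
theorem aux_step (P : ℤ → Prop) (m n : ℤ) (h : m ≤ n) :
    (((Finset.Icc m n).filter fun a => P a).card : ℤ) =
      (((Finset.Icc m (n - 1)).filter fun a => P a).card : ℤ) + if P n then 1 else 0 := by
  have e : Finset.Icc m n = insert n (Finset.Icc m (n - 1)) := by
    ext x
    simp only [Finset.mem_Icc, Finset.mem_insert]
    omega
  rw [e, Finset.filter_insert]
  split_ifs with hn
  · rw [Finset.card_insert_of_notMem (by simp)]
    push_cast
    ring
  · simp

/-- A horizontal step of the segment is at an element of `H`. -/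
theorem aux_horiz (lt : ℤ → ℤ → Prop) (p q : Pt) (x y : ℤ)
    (h1 : ((x, y) : Pt) ∈ seg lt p q) (h2 : ((x + 1, y) : Pt) ∈ seg lt p q) :
    Hmem lt p q (x + y) := by
  obtain ⟨-, -, -, -, hs, -, h1⟩ := h1
  obtain ⟨-, -, -, -, -, -, h2⟩ := h2
  simp only at hs h1 h2
  rw [show x + 1 + y - 1 = x + y by ring, aux_step _ _ _ hs] at h2
  by_contra hn
  rw [if_neg hn] at h2
  omega

/-- A vertical step of the segment is at a non-element of `H`. -/
theorem aux_vert (lt : ℤ → ℤ → Prop) (p q : Pt) (x y : ℤ)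
    (h1 : ((x, y) : Pt) ∈ seg lt p q) (h2 : ((x, y + 1) : Pt) ∈ seg lt p q) :
    ¬ Hmem lt p q (x + y) := by
  obtain ⟨-, -, -, -, hs, -, h1⟩ := h1
  obtain ⟨-, -, -, -, -, -, h2⟩ := h2
  simp only at hs h1 h2
  rw [show x + (y + 1) - 1 = x + y by ring, aux_step _ _ _ hs] at h2
  intro hn
  rw [if_pos hn] at h2
  omega

/-- An element of `H` precedes each non-element of `H` in the interval. -/
theorem aux_lt (lt : ℤ → ℤ → Prop) [IsStrictTotalOrder ℤ lt] (p q : Pt) (a b : ℤ)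
    (ha : Hmem lt p q a) (hb : ¬ Hmem lt p q b) (hbI : b ∈ Ival p q) : lt a b := by
  by_contra hab
  apply hb
  refine ⟨hbI, le_trans ?_ ha.2⟩
  unfold rankLE
  norm_cast
  apply Finset.card_le_card
  intro y hy
  rw [Finset.mem_filter] at hy ⊢
  refine ⟨hy.1, ?_⟩
  rcases trichotomous_of lt a b with h | h | h
  · exact absurd h hab
  · subst h
    exact hy.2
  · rcases hy.2 with h' | h'
    · exact Or.inl (trans_of lt h' h)
    · subst h'
      exact Or.inl h

/-- two digital segments emanating from the same point `p` into its first
quadrant, generated by the same linear order, have no witness to the violation of (S3). -/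
theorem statement1 (lt : ℤ → ℤ → Prop) [IsStrictTotalOrder ℤ lt]
    (p q q' : Pt) (hq : Quad1 p q) (hq' : Quad1 p q') :
    ¬ ∃ t₁ t₂ : Pt, Witness (seg lt p q) (seg lt p q') t₁ t₂ := by
  rintro ⟨⟨x, y⟩, ⟨z, w⟩, h1, h1', h2, h2', hlt, h3, h3', h4, h4'⟩
  simp only at hlt h3 h3' h4 h4'
  have a1 := aux_horiz lt p q x y h1 h3
  have a2 := aux_vert lt p q' x y h1' h3'
  have b1 := aux_vert lt p q z (w - 1) h4 (by simpa using h2)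
  have b2 := aux_horiz lt p q' (z - 1) w h4' (by simpa using h2')
  rw [show z - 1 + w = z + (w - 1) by ring] at b2
  have hbI : z + (w - 1) ∈ Ival p q := by
    have u := h4.2.2.2.2.1
    have v := h2.2.2.2.2.2.1
    simp only at u v
    unfold Ival
    rw [Finset.mem_Icc]
    omega
  have haI : x + y ∈ Ival p q' := by
    have u := h1'.2.2.2.2.1
    have v := h3'.2.2.2.2.2.1
    simp only at u v
    unfold Ival
    rw [Finset.mem_Icc]
    omega
  exact asymm_of lt (aux_lt lt p q _ _ a1 b1 hbI) (aux_lt lt p q' _ _ b2 a2 haI)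
end

section
/- (Lemma 1) Let p, p' ∈ ℤ² with p.x ≤ p'.x and let ≺, ≺' be linear orders on ℤ. If some integers a ≠ b form a bad pair for (≺,p) and (≺',p'), then there exists a point p₃ ∈ Q¹_p ∩ Q¹_{p'} and integers a, b ∈ I(p,p₃) ∩ I(p',p₃) such that a ∈ H(≺,p,p₃), b ∉ H(≺,p,p₃), b ∈ H(≺',p',p₃), and a ∉ H(≺',p',p₃) (i.e., the dividing line corresponding to p₃ splits a bad pair). -/
open scoped Classical

theorem rankLE_nonneg_aux (lt : ℤ → ℤ → Prop) (J : Finset ℤ) (x : ℤ) : 0 ≤ rankLE lt J x := by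
  unfold rankLE
  positivity

theorem rankLE_le_aux (lt : ℤ → ℤ → Prop) (u C : ℤ) (x : ℤ) (h : u ≤ C) :
    rankLE lt (Finset.Icc u (C - 1)) x ≤ C - u := by
  have h1 : rankLE lt (Finset.Icc u (C - 1)) x ≤ ((Finset.Icc u (C - 1)).card : ℤ) := by
    unfold rankLE
    exact_mod_cast Finset.card_filter_le _ _
  rw [Int.card_Icc] at h1
  omega

/-- Lemma 1: if `(≺,p)` and `(≺',p')` have a bad pair, then there is a point
`p₃ ∈ Q¹_p ∩ Q¹_{p'}` whose dividing line splits a bad pair. -/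
theorem statement2 (p p' : Pt) (hx : p.1 ≤ p'.1) (lt lt' : ℤ → ℤ → Prop)
    [IsStrictTotalOrder ℤ lt] [IsStrictTotalOrder ℤ lt']
    (h : ∃ a b : ℤ, BadPair lt lt' p p' a b) :
    ∃ p₃ : Pt, Quad1 p p₃ ∧ Quad1 p' p₃ ∧
      ∃ a b : ℤ, a ∈ Ival p p₃ ∧ a ∈ Ival p' p₃ ∧ b ∈ Ival p p₃ ∧ b ∈ Ival p' p₃ ∧
        Hmem lt p p₃ a ∧ ¬ Hmem lt p p₃ b ∧ Hmem lt' p' p₃ b ∧ ¬ Hmem lt' p' p₃ a := by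
  obtain ⟨a, b, -, C, l, hC, hC', ha, hb, ha', hb', h1, h2, h3, h4⟩ := h
  have r1 := rankLE_nonneg_aux lt (Finset.Icc (p.1 + p.2) (C - 1)) a
  have r2 := rankLE_nonneg_aux lt' (Finset.Icc (p'.1 + p'.2) (C - 1)) b
  have r3 := rankLE_le_aux lt (p.1 + p.2) C b hC
  have r4 := rankLE_le_aux lt' (p'.1 + p'.2) C a hC'
  have s1 := h1.2
  have s3 := h3.2
  have s2 : l < rankLE lt (Finset.Icc (p.1 + p.2) (C - 1)) b := by
    by_contra hh
    exact h2 ⟨hb, not_lt.mp hh⟩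
  have s4 : l - (p'.1 - p.1) < rankLE lt' (Finset.Icc (p'.1 + p'.2) (C - 1)) a := by
    by_contra hh
    exact h4 ⟨ha', not_lt.mp hh⟩
  have e1 : p.1 + l + (C - (p.1 + l)) - 1 = C - 1 := by ring
  have e2 : p.1 + l - p.1 = l := by ring
  have e3 : p.1 + l - p'.1 = l - (p'.1 - p.1) := by ring
  refine ⟨(p.1 + l, C - (p.1 + l)), ⟨?_, ?_⟩, ⟨?_, ?_⟩, a, b, ?_⟩
  · dsimp only; omega
  · dsimp only; omega
  · dsimp only; omega
  · dsimp only; omega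
  · simp only [Hmem, Ival, e1, e2, e3]
    exact ⟨ha, ha', hb, hb', h1, h2, h3, h4⟩
end

section
/- Let S ⊆ ℤ² be the point set of a nonnegative monotone lattice path (the set {r₀, …, r_n} of a finite sequence with r_{i+1} − r_i ∈ {(1,0), (0,1)} for all i) and let S' ⊆ ℤ² be the point set of a nonpositive monotone lattice path (the set {s₀, …, s_m} of a finite sequence with s_{j+1} − s_j ∈ {(1,0), (0,−1)} for all j). Then any two points r, r' ∈ S ∩ S' satisfy r.x = r'.x or r.y = r'.y. In particular, a segment with nonnegative slope and a segment with nonpositive slope can never have a witness to the violation of (S3). -/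
open scoped Classical

/-- Any two points of a nonnegative monotone path are comparable. -/
theorem pos_mono (n : ℕ) (r : ℕ → Pt)
    (hr : ∀ i, i < n → r (i + 1) - r i = ((1, 0) : Pt) ∨ r (i + 1) - r i = ((0, 1) : Pt))
    (i k : ℕ) (h : i + k ≤ n) : (r i).1 ≤ (r (i + k)).1 ∧ (r i).2 ≤ (r (i + k)).2 := by
  induction k with
  | zero => simp
  | succ k ih =>
    have ih' := ih (by omega)
    have h1 := hr (i + k) (by omega)
    simp only [Prod.ext_iff, Prod.fst_sub, Prod.snd_sub] at h1
    rw [← add_assoc]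
    omega

theorem neg_mono (n : ℕ) (r : ℕ → Pt)
    (hr : ∀ i, i < n → r (i + 1) - r i = ((1, 0) : Pt) ∨ r (i + 1) - r i = ((0, -1) : Pt))
    (i k : ℕ) (h : i + k ≤ n) : (r i).1 ≤ (r (i + k)).1 ∧ (r (i + k)).2 ≤ (r i).2 := by
  induction k with
  | zero => simp
  | succ k ih =>
    have ih' := ih (by omega)
    have h1 := hr (i + k) (by omega)
    simp only [Prod.ext_iff, Prod.fst_sub, Prod.snd_sub] at h1
    rw [← add_assoc]
    omega

/-- a nonnegative monotone lattice path and a nonpositive monotone lattice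
path intersect only in points sharing an `x`- or a `y`-coordinate; in particular the pair
of point sets has no witness to the violation of (S3). -/
theorem statement4 (n m : ℕ) (r s : ℕ → Pt)
    (hr : ∀ i, i < n → r (i + 1) - r i = ((1, 0) : Pt) ∨ r (i + 1) - r i = ((0, 1) : Pt))
    (hs : ∀ j, j < m → s (j + 1) - s j = ((1, 0) : Pt) ∨ s (j + 1) - s j = ((0, -1) : Pt)) :
    (∀ u v : Pt,
      u ∈ r '' {i | i ≤ n} → u ∈ s '' {j | j ≤ m} →
      v ∈ r '' {i | i ≤ n} → v ∈ s '' {j | j ≤ m} →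
      u.1 = v.1 ∨ u.2 = v.2) ∧
    ¬ ∃ t₁ t₂ : Pt, Witness (r '' {i | i ≤ n}) (s '' {j | j ≤ m}) t₁ t₂ := by
  have P : ∀ u v : Pt, u ∈ r '' {i | i ≤ n} → v ∈ r '' {i | i ≤ n} →
      (u.1 ≤ v.1 ∧ u.2 ≤ v.2) ∨ (v.1 ≤ u.1 ∧ v.2 ≤ u.2) := by
    rintro _ _ ⟨i, hi, rfl⟩ ⟨j, hj, rfl⟩
    rw [Set.mem_setOf_eq] at hi hj
    rcases le_total i j with h | h
    · obtain ⟨k, rfl⟩ := Nat.exists_eq_add_of_le h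
      exact Or.inl (pos_mono n r hr i k hj)
    · obtain ⟨k, rfl⟩ := Nat.exists_eq_add_of_le h
      exact Or.inr (pos_mono n r hr j k hi)
  have N : ∀ u v : Pt, u ∈ s '' {j | j ≤ m} → v ∈ s '' {j | j ≤ m} →
      (u.1 ≤ v.1 ∧ v.2 ≤ u.2) ∨ (v.1 ≤ u.1 ∧ u.2 ≤ v.2) := by
    rintro _ _ ⟨i, hi, rfl⟩ ⟨j, hj, rfl⟩
    rw [Set.mem_setOf_eq] at hi hj
    rcases le_total i j with h | h
    · obtain ⟨k, rfl⟩ := Nat.exists_eq_add_of_le h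
      exact Or.inl (neg_mono m s hs i k hj)
    · obtain ⟨k, rfl⟩ := Nat.exists_eq_add_of_le h
      exact Or.inr (neg_mono m s hs j k hi)
  refine ⟨fun u v h1 h2 h3 h4 => ?_, ?_⟩
  · have a := P u v h1 h3
    have b := N u v h2 h4
    omega
  · rintro ⟨t₁, t₂, h1, h2, h3, h4, hlt, h5, h6, h7, h8⟩
    have a := P _ _ h1 h3
    have b := N _ _ h2 h4
    have c := P _ _ h5 h3
    have d := P _ _ h1 h7
    simp only at c d
    omega
end

section
/- Let p, p' ∈ ℤ² with p.x ≤ p'.x and let ≺, ≺' be linear orders on ℤ such that no two integers form a bad pair for (≺,p) and (≺',p'). Then for every q ∈ Q¹_p and q' ∈ Q¹_{p'}, the pair of digital segments (R(≺,p,q), R(≺',p',q')) has no witness to the violation of (S3), and neither does the pair (R(≺',p',q'), R(≺,p,q)). -/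
open scoped Classical

lemma rankLE_mono (lt : ℤ → ℤ → Prop) [IsStrictTotalOrder ℤ lt] (J : Finset ℤ) {a b : ℤ}
    (h : lt a b) : rankLE lt J a ≤ rankLE lt J b := by
  unfold rankLE
  norm_cast
  apply Finset.card_le_card
  intro y hy
  simp only [Finset.mem_filter] at hy ⊢
  refine ⟨hy.1, Or.inl ?_⟩
  rcases hy.2 with h1 | h1
  · exact _root_.trans_of lt h1 h
  · exact h1 ▸ h

lemma among_iff (lt : ℤ → ℤ → Prop) [IsStrictTotalOrder ℤ lt] {p q r : Pt}
    (hr : r ∈ seg lt p q) {a : ℤ} (ha : a ∈ Finset.Icc (p.1 + p.2) (r.1 + r.2 - 1)) :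
    AmongSmallest lt (Finset.Icc (p.1 + p.2) (r.1 + r.2 - 1)) (r.1 - p.1) a ↔ Hmem lt p q a := by
  obtain ⟨-, -, -, -, -, hle, hcard⟩ := hr
  have hsub : ∀ y ∈ Finset.Icc (p.1 + p.2) (r.1 + r.2 - 1), y ∈ Ival p q := by
    intro y hy
    simp only [Ival, Finset.mem_Icc] at hy ⊢
    omega
  constructor
  · rintro ⟨-, h⟩
    by_contra hn
    rw [hcard] at h
    unfold rankLE at h
    norm_cast at h
    refine absurd h (not_le.mpr (Finset.card_lt_card ?_))
    rw [Finset.ssubset_iff_of_subset]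
    · exact ⟨a, by simpa using ha, by simp [hn]⟩
    · intro y hy
      simp only [Finset.mem_filter] at hy ⊢
      refine ⟨hy.1, ?_⟩
      rcases trichotomous_of lt y a with h1 | h1 | h1
      · exact Or.inl h1
      · exact Or.inr h1
      · exact absurd ⟨hsub a ha, (rankLE_mono lt _ h1).trans hy.2.2⟩ hn
  · intro h
    refine ⟨ha, ?_⟩
    rw [hcard]
    unfold rankLE
    norm_cast
    apply Finset.card_le_card
    intro y hy
    simp only [Finset.mem_filter] at hy ⊢
    refine ⟨hy.1, ?_⟩
    rcases hy.2 with h1 | h1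
    · exact ⟨hsub y hy.1, (rankLE_mono lt _ h1).trans h.2⟩
    · exact h1 ▸ h

lemma card_step (P : ℤ → Prop) (s n : ℤ) (h : s ≤ n) :
    (((Finset.Icc s n).filter P).card : ℤ) =
      ((Finset.Icc s (n - 1)).filter P).card + if P n then 1 else 0 := by
  have : Finset.Icc s n = insert n (Finset.Icc s (n - 1)) := by
    ext x
    simp only [Finset.mem_insert, Finset.mem_Icc]
    omega
  rw [this, Finset.filter_insert]
  split_ifs with hP
  · rw [Finset.card_insert_of_notMem (by simp)]
    push_cast
    rfl
  · simp

lemma step_right (lt : ℤ → ℤ → Prop) {p q t : Pt} {x y : ℤ} (ht : ((x, y) : Pt) ∈ seg lt p q)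
    (h : ((x + 1, y) : Pt) ∈ seg lt p q) : Hmem lt p q (x + y) := by
  obtain ⟨-, -, -, -, h0, -, h1⟩ := ht
  obtain ⟨-, -, -, -, -, -, h2⟩ := h
  simp only at h0 h1 h2
  rw [show x + 1 + y - 1 = x + y by ring, card_step _ _ _ h0] at h2
  by_contra hn
  rw [if_neg hn] at h2
  omega

lemma step_up (lt : ℤ → ℤ → Prop) {p q t : Pt} {x y : ℤ} (ht : ((x, y) : Pt) ∈ seg lt p q)
    (h : ((x, y + 1) : Pt) ∈ seg lt p q) : ¬ Hmem lt p q (x + y) := by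
  obtain ⟨-, -, -, -, h0, -, h1⟩ := ht
  obtain ⟨-, -, -, -, -, -, h2⟩ := h
  simp only at h0 h1 h2
  rw [show x + (y + 1) - 1 = x + y by ring, card_step _ _ _ h0] at h2
  intro hn
  rw [if_pos hn] at h2
  omega

/-- A witness forces opposite memberships in the truncated intervals. -/
lemma witness_facts (lt lt' : ℤ → ℤ → Prop) [IsStrictTotalOrder ℤ lt] [IsStrictTotalOrder ℤ lt']
    {p p' q q' t₁ t₂ : Pt} (hw : Witness (seg lt p q) (seg lt' p' q') t₁ t₂) :
    ∃ a b C X : ℤ, a ≠ b ∧ p.1 + p.2 ≤ C ∧ p'.1 + p'.2 ≤ C ∧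
      a ∈ Finset.Icc (p.1 + p.2) (C - 1) ∧ b ∈ Finset.Icc (p.1 + p.2) (C - 1) ∧
      a ∈ Finset.Icc (p'.1 + p'.2) (C - 1) ∧ b ∈ Finset.Icc (p'.1 + p'.2) (C - 1) ∧
      AmongSmallest lt (Finset.Icc (p.1 + p.2) (C - 1)) (X - p.1) a ∧
      ¬ AmongSmallest lt (Finset.Icc (p.1 + p.2) (C - 1)) (X - p.1) b ∧
      AmongSmallest lt' (Finset.Icc (p'.1 + p'.2) (C - 1)) (X - p'.1) b ∧
      ¬ AmongSmallest lt' (Finset.Icc (p'.1 + p'.2) (C - 1)) (X - p'.1) a := by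
  obtain ⟨x₁, y₁⟩ := t₁
  obtain ⟨x₂, y₂⟩ := t₂
  obtain ⟨h1, h1', h2, h2', hlt, hr, hu, hd, hl⟩ := hw
  simp only at hlt hr hu hd hl
  have A := step_right (t := p) lt h1 hr
  have A' := step_up (t := p) lt' h1' hu
  have B := step_up (t := p) lt hd (by simpa using h2)
  have B' := step_right (t := p) lt' hl (by simpa using h2')
  rw [show x₂ - 1 + y₂ = x₂ + (y₂ - 1) by ring] at B'
  have e1 := h1.2.2.2.2.1
  have e1' := h1'.2.2.2.2.1
  simp only at e1 e1'
  have m1 : x₁ + y₁ ∈ Finset.Icc (p.1 + p.2) (x₂ + y₂ - 1) := by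
    rw [Finset.mem_Icc]; omega
  have m2 : x₂ + (y₂ - 1) ∈ Finset.Icc (p.1 + p.2) (x₂ + y₂ - 1) := by
    rw [Finset.mem_Icc]; omega
  have m1' : x₁ + y₁ ∈ Finset.Icc (p'.1 + p'.2) (x₂ + y₂ - 1) := by
    rw [Finset.mem_Icc]; omega
  have m2' : x₂ + (y₂ - 1) ∈ Finset.Icc (p'.1 + p'.2) (x₂ + y₂ - 1) := by
    rw [Finset.mem_Icc]; omega
  refine ⟨x₁ + y₁, x₂ + (y₂ - 1), x₂ + y₂, x₂, ?_, by omega, by omega, m1, m2, m1', m2',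
    (among_iff lt h2 m1).2 A, fun h => B ((among_iff lt h2 m2).1 h),
    (among_iff lt' h2' m2').2 B', fun h => A' ((among_iff lt' h2' m1').1 h)⟩
  intro h
  rw [h] at A
  exact B A

/-- if `(≺,p)` and `(≺',p')` have no bad pair, then no pair of digital
segments `R(≺,p,q)`, `R(≺',p',q')` (in either order) has a witness to the
violation of (S3). -/
theorem statement5 (p p' : Pt) (hx : p.1 ≤ p'.1) (lt lt' : ℤ → ℤ → Prop)
    [IsStrictTotalOrder ℤ lt] [IsStrictTotalOrder ℤ lt']
    (hnb : ∀ a b : ℤ, ¬ BadPair lt lt' p p' a b)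
    (q q' : Pt) (hq : Quad1 p q) (hq' : Quad1 p' q') :
    (¬ ∃ t₁ t₂ : Pt, Witness (seg lt p q) (seg lt' p' q') t₁ t₂) ∧
    (¬ ∃ t₁ t₂ : Pt, Witness (seg lt' p' q') (seg lt p q) t₁ t₂) := by
  constructor
  · rintro ⟨t₁, t₂, hw⟩
    obtain ⟨a, b, C, X, hne, hC, hC', m1, m2, m1', m2', s1, s2, s3, s4⟩ := witness_facts lt lt' hw
    have e : X - p'.1 = X - p.1 - (p'.1 - p.1) := by ring
    rw [e] at s3 s4
    exact hnb a b ⟨hne, C, X - p.1, hC, hC', m1, m2, m1', m2', s1, s2, s3, s4⟩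
  · rintro ⟨t₁, t₂, hw⟩
    obtain ⟨a, b, C, X, hne, hC, hC', m1, m2, m1', m2', s1, s2, s3, s4⟩ := witness_facts lt' lt hw
    have e : X - p'.1 = X - p.1 - (p'.1 - p.1) := by ring
    rw [e] at s1 s2
    exact hnb b a ⟨hne.symm, C, X - p.1, hC', hC, m2', m1', m2, m1, s3, s4, s1, s2⟩
end

section
/- (Lemma 3) Let p ↦ ≺_p be an assignment of a linear order on ℤ to every point p ∈ ℤ² such that for every pair of points p, p' ∈ ℤ² no two integers form a bad pair for (≺_p, p) and (≺_{p'}, p'). Then the generated nonnegative-slope digital segment system satisfies all five properties (S1)–(S5), i.e., it is a CDS. -/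
open scoped Classical

noncomputable def cntP (P : ℤ → Prop) (u v : ℤ) : ℤ :=
  (((Finset.Icc u (v - 1)).filter fun a => P a).card : ℤ)

theorem cntP_add (P : ℤ → Prop) (u v w : ℤ) (h1 : u ≤ v) (h2 : v ≤ w) :
    cntP P u w = cntP P u v + cntP P v w := by
  unfold cntP
  have : ((Finset.Icc u (w - 1)).filter fun a => P a) =
      ((Finset.Icc u (v - 1)).filter fun a => P a) ∪
      ((Finset.Icc v (w - 1)).filter fun a => P a) := by
    ext x
    simp only [Finset.mem_filter, Finset.mem_Icc, Finset.mem_union]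
    constructor
    · rintro ⟨⟨a, b⟩, c⟩
      by_cases h : x ≤ v - 1
      · exact Or.inl ⟨⟨a, h⟩, c⟩
      · exact Or.inr ⟨⟨by omega, b⟩, c⟩
    · rintro (⟨⟨a, b⟩, c⟩ | ⟨⟨a, b⟩, c⟩)
      · exact ⟨⟨a, by omega⟩, c⟩
      · exact ⟨⟨by omega, b⟩, c⟩
  rw [this, Finset.card_union_of_disjoint]
  · push_cast; rfl
  · rw [Finset.disjoint_left]
    intro x hx hy
    simp only [Finset.mem_filter, Finset.mem_Icc] at hx hy
    omega

theorem cntP_self (P : ℤ → Prop) (u : ℤ) : cntP P u u = 0 := by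
  unfold cntP
  rw [Finset.Icc_eq_empty (by omega)]
  simp

theorem cntP_nonneg (P : ℤ → Prop) (u v : ℤ) : 0 ≤ cntP P u v := by
  unfold cntP; positivity

theorem cntP_le (P : ℤ → Prop) (u v : ℤ) (h : u ≤ v) : cntP P u v ≤ v - u := by
  unfold cntP
  have := Finset.card_filter_le (Finset.Icc u (v - 1)) (fun a => P a)
  rw [Int.card_Icc] at this
  omega

theorem cntP_congr (P Q : ℤ → Prop) (u v : ℤ) (h : ∀ x, u ≤ x → x ≤ v - 1 → (P x ↔ Q x)) :
    cntP P u v = cntP Q u v := by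
  unfold cntP
  congr 2
  apply Finset.filter_congr
  intro x hx
  rw [Finset.mem_Icc] at hx
  exact h x hx.1 hx.2

theorem cntP_one (P : ℤ → Prop) (u v : ℤ) (h : v = u + 1) :
    cntP P u v = if P u then 1 else 0 := by
  subst h
  unfold cntP
  simp only [add_sub_cancel_right, Finset.Icc_self, Finset.filter_singleton]
  split_ifs <;> simp

theorem rank_lt {lt : ℤ → ℤ → Prop} (ho : IsStrictTotalOrder ℤ lt) (J : Finset ℤ) {x y : ℤ}
    (hy : y ∈ J) (h : lt x y) : rankLE lt J x < rankLE lt J y := by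
  unfold rankLE
  norm_cast
  apply Finset.card_lt_card
  rw [Finset.ssubset_iff_of_subset]
  · refine ⟨y, by simp [hy], ?_⟩
    simp only [Finset.mem_filter, not_and, not_or]
    intro _
    refine ⟨fun h' => ho.irrefl _ (ho.trans _ _ _ h h'), ?_⟩
    rintro rfl
    exact ho.irrefl _ h
  · intro z hz
    simp only [Finset.mem_filter] at hz ⊢
    refine ⟨hz.1, Or.inl ?_⟩
    rcases hz.2 with h' | rfl
    · exact ho.trans _ _ _ h' h
    · exact h

theorem lt_tri {lt : ℤ → ℤ → Prop} (ho : IsStrictTotalOrder ℤ lt) (x y : ℤ) :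
    lt x y ∨ x = y ∨ lt y x := by
  rcases ho with ⟨⟩
  exact trichotomous_of lt x y

theorem card_small {lt : ℤ → ℤ → Prop} (ho : IsStrictTotalOrder ℤ lt) (J : Finset ℤ) (k : ℤ)
    (h0 : 0 ≤ k) (hk : k ≤ J.card) :
    ((J.filter fun a => AmongSmallest lt J k a).card : ℤ) = k := by
  have inj : Set.InjOn (rankLE lt J) J := by
    intro x hx y hy hxy
    rcases lt_tri ho x y with h | h | h
    · have := rank_lt ho J hy h; omega
    · exact h
    · have := rank_lt ho J hx h; omega
  have him : J.image (rankLE lt J) = Finset.Icc 1 (J.card : ℤ) := by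
    apply Finset.eq_of_subset_of_card_le
    · intro z hz
      rw [Finset.mem_image] at hz
      obtain ⟨x, hx, rfl⟩ := hz
      rw [Finset.mem_Icc]
      unfold rankLE
      constructor
      · have : 0 < (J.filter fun y => lt y x ∨ y = x).card :=
          Finset.card_pos.mpr ⟨x, by simp [hx]⟩
        omega
      · exact_mod_cast Finset.card_filter_le _ _
    · rw [Finset.card_image_of_injOn inj, Int.card_Icc]; omega
  have him2 : (J.filter fun a => AmongSmallest lt J k a).image (rankLE lt J) = Finset.Icc 1 k := by
    ext z
    simp only [Finset.mem_image, Finset.mem_filter]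
    constructor
    · rintro ⟨x, ⟨hx, _, h⟩, rfl⟩
      have : rankLE lt J x ∈ Finset.Icc 1 (J.card : ℤ) := him ▸ Finset.mem_image_of_mem _ hx
      rw [Finset.mem_Icc] at this ⊢
      omega
    · intro hz
      rw [Finset.mem_Icc] at hz
      have : z ∈ Finset.Icc 1 (J.card : ℤ) := by rw [Finset.mem_Icc]; omega
      rw [← him, Finset.mem_image] at this
      obtain ⟨x, hx, rfl⟩ := this
      exact ⟨x, ⟨hx, hx, hz.2⟩, rfl⟩
  have hc := congrArg Finset.card him2
  rw [Finset.card_image_of_injOn (inj.mono (by simp [Finset.coe_filter, Set.subset_def]; tauto)),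
    Int.card_Icc] at hc
  omega

theorem restrict {lt : ℤ → ℤ → Prop} (ho : IsStrictTotalOrder ℤ lt) (J J' : Finset ℤ)
    (hJ : J' ⊆ J) (k x m : ℤ) (hx : x ∈ J')
    (hm : m = ((J'.filter fun a => AmongSmallest lt J k a).card : ℤ)) :
    AmongSmallest lt J' m x ↔ AmongSmallest lt J k x := by
  subst hm
  by_cases h : AmongSmallest lt J k x
  · refine ⟨fun _ => h, fun _ => ⟨hx, ?_⟩⟩
    unfold rankLE
    norm_cast
    apply Finset.card_le_card
    intro y hy
    simp only [Finset.mem_filter] at hy ⊢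
    refine ⟨hy.1, hJ hy.1, ?_⟩
    rcases hy.2 with h' | rfl
    · have := rank_lt ho J (hJ hx) h'
      have := h.2
      omega
    · exact h.2
  · refine ⟨fun h1 => absurd h1 ?_, fun h1 => absurd h1 h⟩
    rintro ⟨_, h2⟩
    revert h2
    unfold rankLE
    norm_cast
    apply not_le_of_gt
    apply Finset.card_lt_card
    rw [Finset.ssubset_iff_of_subset]
    · exact ⟨x, by simp [hx], by simp [h]⟩
    · intro y hy
      simp only [Finset.mem_filter] at hy ⊢
      refine ⟨hy.1, ?_⟩
      rcases lt_tri ho y x with h' | h' | h'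
      · exact Or.inl h'
      · exact Or.inr h'
      · exfalso
        apply h
        refine ⟨hJ hx, ?_⟩
        have := rank_lt ho J (hJ hy.1) h'
        have := hy.2.2
        omega

theorem cnt_full {lt : ℤ → ℤ → Prop} (ho : IsStrictTotalOrder ℤ lt) (p q : Pt)
    (h1 : p.1 ≤ q.1) (h2 : p.2 ≤ q.2) :
    cntP (Hmem lt p q) (p.1 + p.2) (q.1 + q.2) = q.1 - p.1 := by
  have := card_small ho (Ival p q) (q.1 - p.1) (by omega)
    (by unfold Ival; rw [Int.card_Icc]; omega)
  exact this

theorem mem_seg {lt : ℤ → ℤ → Prop} (p q r : Pt) : r ∈ seg lt p q ↔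
    p.1 ≤ r.1 ∧ r.1 ≤ q.1 ∧ p.2 ≤ r.2 ∧ r.2 ≤ q.2 ∧
    p.1 + p.2 ≤ r.1 + r.2 ∧ r.1 + r.2 ≤ q.1 + q.2 ∧
    r.1 - p.1 = cntP (Hmem lt p q) (p.1 + p.2) (r.1 + r.2) := Iff.rfl

theorem left_mem {lt : ℤ → ℤ → Prop} (p q : Pt)
    (h1 : p.1 ≤ q.1) (h2 : p.2 ≤ q.2) : p ∈ seg lt p q := by
  rw [mem_seg, cntP_self]; omega

theorem right_mem {lt : ℤ → ℤ → Prop} (ho : IsStrictTotalOrder ℤ lt) (p q : Pt)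
    (h1 : p.1 ≤ q.1) (h2 : p.2 ≤ q.2) : q ∈ seg lt p q := by
  rw [mem_seg, cnt_full ho p q h1 h2]; omega

theorem hmem_restrict {lt : ℤ → ℤ → Prop} (ho : IsStrictTotalOrder ℤ lt) (p q s : Pt)
    (hs : s ∈ seg lt p q) (x : ℤ) (hx : p.1 + p.2 ≤ x) (hx' : x ≤ s.1 + s.2 - 1) :
    Hmem lt p s x ↔ Hmem lt p q x := by
  rw [mem_seg] at hs
  apply restrict ho (Ival p q) (Ival p s)
  · unfold Ival
    apply Finset.Icc_subset_Icc <;> omega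
  · unfold Ival; rw [Finset.mem_Icc]; omega
  · exact hs.2.2.2.2.2.2

theorem seg_S3 (ord : Pt → ℤ → ℤ → Prop)
    (hord : ∀ p : Pt, IsStrictTotalOrder ℤ (ord p))
    (hnb : ∀ p p' : Pt, p.1 ≤ p'.1 → ∀ a b : ℤ, ¬ BadPair (ord p) (ord p') p p' a b)
    (p q r s : Pt) (hr : r ∈ seg (ord p) p q) (hs : s ∈ seg (ord p) p q)
    (h1 : r.1 ≤ s.1) (h2 : r.2 ≤ s.2) : seg (ord r) r s ⊆ seg (ord p) p q := by
  have hr' := (mem_seg _ _ _).1 hr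
  have hs' := (mem_seg _ _ _).1 hs
  have hadd := cntP_add (Hmem (ord p) p q) (p.1 + p.2) (r.1 + r.2) (s.1 + s.2)
    (by omega) (by omega)
  have hc : cntP (Hmem (ord p) p q) (r.1 + r.2) (s.1 + s.2) =
      cntP (Hmem (ord r) r s) (r.1 + r.2) (s.1 + s.2) := by
    rw [cnt_full (hord r) r s h1 h2]; omega
  have key : ((Finset.Icc (r.1 + r.2) (s.1 + s.2 - 1)).filter fun a => Hmem (ord p) p q a) =
      ((Finset.Icc (r.1 + r.2) (s.1 + s.2 - 1)).filter fun a => Hmem (ord r) r s a) := by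
    unfold cntP at hc
    norm_cast at hc
    by_contra hne
    have hA : ¬ ((_ : Finset ℤ) ⊆ _) := fun h => hne (Finset.eq_of_subset_of_card_le h hc.ge)
    have hB : ¬ ((_ : Finset ℤ) ⊆ _) := fun h => hne (Finset.eq_of_subset_of_card_le h hc.le).symm
    rw [Finset.not_subset] at hA hB
    obtain ⟨a, ha, ha'⟩ := hA
    obtain ⟨b, hb, hb'⟩ := hB
    simp only [Finset.mem_filter, not_and] at ha ha' hb hb'
    have ha2 := ha' ha.1
    have hb2 := hb' hb.1
    have hai := Finset.mem_Icc.1 ha.1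
    have hbi := Finset.mem_Icc.1 hb.1
    have ha3 := (hmem_restrict (hord p) p q s hs a (by omega) (by omega)).2 ha.2
    have hb3 := fun h => hb2 ((hmem_restrict (hord p) p q s hs b (by omega) (by omega)).1 h)
    have e : s.1 - p.1 - (r.1 - p.1) = s.1 - r.1 := by ring
    refine hnb p r (by omega) a b ⟨?_, s.1 + s.2, s.1 - p.1, by omega, by omega, ?_, ?_,
      ha.1, hb.1, ha3, hb3, ?_, ?_⟩
    · rintro rfl; exact ha2 hb.2
    · rw [Finset.mem_Icc]; omega
    · rw [Finset.mem_Icc]; omega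
    · rw [e]; exact hb.2
    · rw [e]; exact ha2
  intro t ht
  rw [mem_seg] at ht ⊢
  have hadd2 := cntP_add (Hmem (ord p) p q) (p.1 + p.2) (r.1 + r.2) (t.1 + t.2)
    (by omega) (by omega)
  have hcon : cntP (Hmem (ord p) p q) (r.1 + r.2) (t.1 + t.2) =
      cntP (Hmem (ord r) r s) (r.1 + r.2) (t.1 + t.2) := by
    apply cntP_congr
    intro x hx hx'
    have hxi : x ∈ Finset.Icc (r.1 + r.2) (s.1 + s.2 - 1) := by
      rw [Finset.mem_Icc]; omega
    have := Finset.ext_iff.1 key x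
    simpa only [Finset.mem_filter, hxi, true_and] using this
  omega

theorem seg_S4f (ord : Pt → ℤ → ℤ → Prop)
    (hord : ∀ p : Pt, IsStrictTotalOrder ℤ (ord p))
    (hnb : ∀ p p' : Pt, p.1 ≤ p'.1 → ∀ a b : ℤ, ¬ BadPair (ord p) (ord p') p p' a b)
    (p q : Pt) (h1 : p.1 ≤ q.1) (h2 : p.2 ≤ q.2) :
    ∃ r : Pt, r ∉ seg (ord p) p q ∧ p.1 ≤ r.1 ∧ p.2 ≤ r.2 ∧
      seg (ord p) p q ⊆ seg (ord p) p r := by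
  have go : ∀ r : Pt, q.1 ≤ r.1 → q.2 ≤ r.2 → r.1 + r.2 = q.1 + q.2 + 1 →
      q ∈ seg (ord p) p r → ∃ r : Pt, r ∉ seg (ord p) p q ∧ p.1 ≤ r.1 ∧ p.2 ≤ r.2 ∧
      seg (ord p) p q ⊆ seg (ord p) p r := by
    intro r a b c d
    refine ⟨r, ?_, by omega, by omega, ?_⟩
    · rw [mem_seg]; omega
    · exact seg_S3 ord hord hnb p r p q (left_mem p r (by omega) (by omega)) d h1 h2
  by_cases hc : Hmem (ord p) p (q.1 + 1, q.2) (q.1 + q.2)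
  · apply go (q.1 + 1, q.2) (by simp) (by simp) (by simp; ring)
    have hf := cnt_full (hord p) p (q.1 + 1, q.2) (by simp; omega) h2
    rw [mem_seg]
    simp only at hf ⊢
    rw [cntP_add _ _ (q.1 + q.2) _ (by omega) (by omega),
      cntP_one _ (q.1 + q.2) (q.1 + 1 + q.2) (by ring), if_pos hc] at hf
    omega
  · apply go (q.1, q.2 + 1) (by simp) (by simp) (by simp; ring)
    have hc' : ¬ Hmem (ord p) p (q.1, q.2 + 1) (q.1 + q.2) := by
      intro h
      apply hc
      unfold Hmem AmongSmallest Ival at h ⊢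
      simp only at h ⊢
      rw [show q.1 + (q.2 + 1) = q.1 + 1 + q.2 by ring] at h
      exact ⟨h.1, by linarith [h.2]⟩
    have hf := cnt_full (hord p) p (q.1, q.2 + 1) h1 (by simp; omega)
    rw [mem_seg]
    simp only at hf ⊢
    rw [cntP_add _ _ (q.1 + q.2) _ (by omega) (by omega),
      cntP_one _ (q.1 + q.2) (q.1 + (q.2 + 1)) (by ring), if_neg hc'] at hf
    omega

theorem seg_S4b (ord : Pt → ℤ → ℤ → Prop)
    (hord : ∀ p : Pt, IsStrictTotalOrder ℤ (ord p))
    (hnb : ∀ p p' : Pt, p.1 ≤ p'.1 → ∀ a b : ℤ, ¬ BadPair (ord p) (ord p') p p' a b)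
    (p q : Pt) (h1 : p.1 ≤ q.1) (h2 : p.2 ≤ q.2) :
    ∃ r : Pt, r ∉ seg (ord p) p q ∧ r.1 ≤ p.1 ∧ r.2 ≤ p.2 ∧ r ≠ q ∧
      seg (ord p) p q ⊆ seg (ord r) r q := by
  have go : ∀ r : Pt, r.1 ≤ p.1 → r.2 ≤ p.2 → r.1 + r.2 = p.1 + p.2 - 1 →
      p ∈ seg (ord r) r q → ∃ r : Pt, r ∉ seg (ord p) p q ∧ r.1 ≤ p.1 ∧ r.2 ≤ p.2 ∧ r ≠ q ∧
      seg (ord p) p q ⊆ seg (ord r) r q := by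
    intro r a b c d
    refine ⟨r, ?_, by omega, by omega, ?_, ?_⟩
    · rw [mem_seg]; omega
    · rintro rfl; omega
    · exact seg_S3 ord hord hnb r q p q d (right_mem (hord r) r q (by omega) (by omega)) h1 h2
  by_cases hc : Hmem (ord (p.1 - 1, p.2)) (p.1 - 1, p.2) q (p.1 + p.2 - 1)
  · apply go (p.1 - 1, p.2) (by simp) (by simp) (by simp; ring)
    rw [mem_seg]
    simp only
    rw [show p.1 - 1 + p.2 = p.1 + p.2 - 1 by ring, cntP_one _ _ _ (by ring), if_pos hc]
    omega
  · by_cases hc2 : Hmem (ord (p.1, p.2 - 1)) (p.1, p.2 - 1) q (p.1 + p.2 - 1)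
    · exfalso
      have f1 := cnt_full (hord (p.1 - 1, p.2)) (p.1 - 1, p.2) q (by simp; omega) h2
      have f2 := cnt_full (hord (p.1, p.2 - 1)) (p.1, p.2 - 1) q h1 (by simp; omega)
      simp only at f1 f2
      unfold cntP at f1 f2
      have e1 : p.1 - 1 + p.2 = p.1 + p.2 - 1 := by ring
      have e2 : p.1 + (p.2 - 1) = p.1 + p.2 - 1 := by ring
      rw [e1] at f1
      rw [e2] at f2
      obtain ⟨a, ha, ha'⟩ := Finset.exists_mem_notMem_of_card_lt_card
        (s := (Finset.Icc (p.1 + p.2 - 1) (q.1 + q.2 - 1)).filter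
          fun a => Hmem (ord (p.1, p.2 - 1)) (p.1, p.2 - 1) q a)
        (t := (Finset.Icc (p.1 + p.2 - 1) (q.1 + q.2 - 1)).filter
          fun a => Hmem (ord (p.1 - 1, p.2)) (p.1 - 1, p.2) q a) (by omega)
      simp only [Finset.mem_filter, not_and] at ha ha'
      have ha2 := ha' ha.1
      have hci : p.1 + p.2 - 1 ∈ Finset.Icc (p.1 + p.2 - 1) (q.1 + q.2 - 1) := by
        rw [Finset.mem_Icc]; omega
      have e3 : q.1 - (p.1 - 1) - (p.1 - (p.1 - 1)) = q.1 - p.1 := by ring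
      refine hnb (p.1 - 1, p.2) (p.1, p.2 - 1) (by simp) a (p.1 + p.2 - 1)
        ⟨?_, q.1 + q.2, q.1 - (p.1 - 1), ?_, ?_, ?_, ?_, ?_, ?_, ha.2, hc, ?_, ?_⟩
      · rintro rfl; exact hc ha.2
      · simp only; omega
      · simp only; omega
      · simp only [e1]; exact ha.1
      · simp only [e1]; exact hci
      · simp only [e2]; exact ha.1
      · simp only [e2]; exact hci
      · simp only [e3]; exact hc2
      · simp only [e3]; exact ha2
    · apply go (p.1, p.2 - 1) (by simp) (by simp) (by simp; ring)
      rw [mem_seg]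
      simp only
      rw [show p.1 + (p.2 - 1) = p.1 + p.2 - 1 by ring, cntP_one _ _ _ (by ring), if_neg hc2]
      omega

theorem seg_path {lt : ℤ → ℤ → Prop} (ho : IsStrictTotalOrder ℤ lt) (p q : Pt)
    (h1 : p.1 ≤ q.1) (h2 : p.2 ≤ q.2) : IsGridPath (seg lt p q) p q := by
  have hf := cnt_full ho p q h1 h2
  set P := Hmem lt p q with hP
  refine ⟨(q.1 + q.2 - (p.1 + p.2)).toNat,
    fun i => (p.1 + cntP P (p.1 + p.2) (p.1 + p.2 + i),
      p.2 + i - cntP P (p.1 + p.2) (p.1 + p.2 + i)), ?_, ?_, ?_, ?_, ?_⟩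
  · ext <;> simp [cntP_self]
  · have : p.1 + p.2 + ((q.1 + q.2 - (p.1 + p.2)).toNat : ℤ) = q.1 + q.2 := by omega
    ext
    · simp only [this, hf]; omega
    · simp only [this, hf]; omega
  · intro i hi
    have h := cntP_add P (p.1 + p.2) (p.1 + p.2 + i) (p.1 + p.2 + (i + 1)) (by omega) (by omega)
    rw [cntP_one _ (p.1 + p.2 + i) _ (by ring)] at h
    unfold GridAdj
    push_cast
    simp only [h]
    split_ifs
    · ring_nf; norm_num
    · ring_nf; norm_num
  · intro i j _ _ h
    rw [Prod.ext_iff] at h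
    simp only at h
    omega
  · ext r
    rw [mem_seg, Set.mem_ofPred_eq, ← hP]
    constructor
    · intro h
      refine ⟨(r.1 + r.2 - (p.1 + p.2)).toNat, by omega, ?_⟩
      have : p.1 + p.2 + ((r.1 + r.2 - (p.1 + p.2)).toNat : ℤ) = r.1 + r.2 := by omega
      ext
      · simp only [this]; omega
      · simp only [this]; omega
    · rintro ⟨i, hi, rfl⟩
      have a1 := cntP_le P (p.1 + p.2) (p.1 + p.2 + i) (by omega)
      have a2 := cntP_nonneg P (p.1 + p.2) (p.1 + p.2 + i)
      have a3 := cntP_add P (p.1 + p.2) (p.1 + p.2 + i) (q.1 + q.2) (by omega) (by omega)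
      have a4 := cntP_le P (p.1 + p.2 + i) (q.1 + q.2) (by omega)
      have a5 := cntP_nonneg P (p.1 + p.2 + i) (q.1 + q.2)
      simp only
      rw [show p.1 + cntP P (p.1 + p.2) (p.1 + p.2 + i) +
        (p.2 + i - cntP P (p.1 + p.2) (p.1 + p.2 + i)) = p.1 + p.2 + i by ring]
      omega

theorem path_symm (S : Set Pt) (p q : Pt) (h : IsGridPath S p q) : IsGridPath S q p := by
  obtain ⟨n, f, h0, hn, ha, hi, rfl⟩ := h
  refine ⟨n, fun i => f (n - i), by simpa, by simpa, ?_, ?_, ?_⟩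
  · intro i h
    have := ha (n - (i + 1)) (by omega)
    rw [show n - (i + 1) + 1 = n - i by omega] at this
    unfold GridAdj at this ⊢
    rw [abs_sub_comm (f (n - i)).1, abs_sub_comm (f (n - i)).2]
    exact this
  · intro i j hi' hj' h
    have := hi (n - i) (n - j) (by omega) (by omega) h
    omega
  · ext r
    constructor
    · rintro ⟨i, h, rfl⟩
      exact ⟨n - i, by omega, by simp only; congr 1; omega⟩
    · rintro ⟨i, h, rfl⟩
      exact ⟨n - i, by omega, rfl⟩

theorem genR_pos (ord : Pt → ℤ → ℤ → Prop) (p q : Pt) (h1 : p.1 ≤ q.1) (h2 : p.2 ≤ q.2) :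
    genR ord p q = seg (ord p) p q := if_pos ⟨h1, h2⟩

theorem genR_rev (ord : Pt → ℤ → ℤ → Prop) (p q : Pt) (h1 : p.1 ≤ q.1) (h2 : p.2 ≤ q.2) :
    genR ord q p = seg (ord p) p q := by
  unfold genR
  split_ifs with h
  · have : p = q := by ext <;> omega
    rw [this]
  · rfl

/-- Lemma 3: if no pair of assigned total orders has a bad pair, then the
generated nonnegative-slope digital segment system satisfies (S1)-(S5), i.e. is a CDS. -/
theorem statement6 (ord : Pt → ℤ → ℤ → Prop)
    (hord : ∀ p : Pt, IsStrictTotalOrder ℤ (ord p))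
    (hnb : ∀ p p' : Pt, p.1 ≤ p'.1 → ∀ a b : ℤ, ¬ BadPair (ord p) (ord p') p p' a b) :
    IsCDS (genR ord) := by
  have S3 : ∀ p q r s : Pt, r ∈ seg (ord p) p q → s ∈ seg (ord p) p q → NonnegPair r s →
      genR ord r s ⊆ seg (ord p) p q := by
    intro p q r s hr hs h
    rcases h with h | h
    · rw [genR_pos ord r s h.1 h.2]
      exact seg_S3 ord hord hnb p q r s hr hs h.1 h.2
    · rw [genR_rev ord s r h.1 h.2]
      exact seg_S3 ord hord hnb p q s r hs hr h.1 h.2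
  intro p q hpq
  rcases hpq with ⟨h1, h2⟩ | ⟨h1, h2⟩
  · rw [genR_pos ord p q h1 h2, genR_rev ord p q h1 h2]
    refine ⟨seg_path (hord p) p q h1 h2, rfl, S3 p q, ?_, ?_, ?_⟩
    · obtain ⟨r, a, b, c, d⟩ := seg_S4f ord hord hnb p q h1 h2
      exact ⟨r, a, Or.inl ⟨b, c⟩, by rw [genR_pos ord p r b c]; exact d⟩
    · intro h r hr
      rw [mem_seg] at hr; omega
    · intro h r hr
      rw [mem_seg] at hr; omega
  · rw [genR_pos ord q p h1 h2, genR_rev ord q p h1 h2]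
    refine ⟨path_symm _ _ _ (seg_path (hord q) q p h1 h2), rfl, S3 q p, ?_, ?_, ?_⟩
    · obtain ⟨r, a, b, c, _, d⟩ := seg_S4b ord hord hnb q p h1 h2
      exact ⟨r, a, Or.inr ⟨by omega, by omega⟩,
        by rw [genR_rev ord r p (by omega) (by omega)]; exact d⟩
    · intro h r hr
      rw [mem_seg] at hr; omega
    · intro h r hr
      rw [mem_seg] at hr; omega
end

section
/- (Lemma 4) Let p ↦ ≺_p be an assignment of a linear order on ℤ to every point p ∈ ℤ² whose generated nonnegative-slope digital segment system is a CDS. Then every two segments of the generated system are smooth if and only if for every pair of points p, p' ∈ ℤ² the orders ≺_p and ≺_{p'} are in agreement. -/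
open scoped Classical

theorem aux_path_sum (f : ℕ → Pt) (n : ℕ) (c : ℤ)
    (hadj : ∀ i, i < n → GridAdj (f i) (f (i + 1)))
    (h0 : (f 0).1 + (f 0).2 ≤ c) (hn : c ≤ (f n).1 + (f n).2) :
    ∃ i, i ≤ n ∧ (f i).1 + (f i).2 = c := by
  induction n with
  | zero => exact ⟨0, le_rfl, by omega⟩
  | succ n ih =>
    by_cases h : c ≤ (f n).1 + (f n).2
    · obtain ⟨i, hi, hc⟩ := ih (fun i hi => hadj i (by omega)) h
      exact ⟨i, by omega, hc⟩
    · refine ⟨n + 1, le_rfl, ?_⟩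
      have h1 := hadj n (by omega)
      unfold GridAdj at h1
      have h2 := neg_abs_le ((f n).1 - (f (n+1)).1)
      have h3 := neg_abs_le ((f n).2 - (f (n+1)).2)
      omega

theorem aux_exists (ord : Pt → ℤ → ℤ → Prop) (hcds : IsCDS (genR ord)) (p q : Pt)
    (hq : Quad1 p q) (c : ℤ) (h0 : p.1 + p.2 ≤ c) (hn : c ≤ q.1 + q.2) :
    ∃ r ∈ seg (ord p) p q, r.1 + r.2 = c := by
  obtain ⟨⟨n, f, hf0, hfn, hadj, -, hS⟩, -⟩ := hcds p q (Or.inl hq)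
  have hg : genR ord p q = seg (ord p) p q := if_pos hq
  obtain ⟨i, hi, hc⟩ := aux_path_sum f n c hadj (by rw [hf0]; exact h0) (by rw [hfn]; exact hn)
  refine ⟨f i, ?_, hc⟩
  rw [← hg, hS]
  exact ⟨i, hi, rfl⟩

theorem aux_diff (lt : ℤ → ℤ → Prop) (p q r s : Pt) (hr : r ∈ seg lt p q) (hs : s ∈ seg lt p q)
    (hle : r.1 + r.2 ≤ s.1 + s.2) :
    s.1 - r.1 = (((Finset.Icc (r.1 + r.2) (s.1 + s.2 - 1)).filter
      fun a => Hmem lt p q a).card : ℤ) := by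
  obtain ⟨-, -, -, -, h1, -, h2⟩ := hr
  obtain ⟨-, -, -, -, -, -, h3⟩ := hs
  have hU : (Finset.Icc (p.1 + p.2) (s.1 + s.2 - 1)).filter (fun a => Hmem lt p q a) =
      (Finset.Icc (p.1 + p.2) (r.1 + r.2 - 1)).filter (fun a => Hmem lt p q a) ∪
      (Finset.Icc (r.1 + r.2) (s.1 + s.2 - 1)).filter (fun a => Hmem lt p q a) := by
    rw [← Finset.filter_union]
    congr 1
    ext x
    simp only [Finset.mem_union, Finset.mem_Icc]
    omega
  have hD : Disjoint ((Finset.Icc (p.1 + p.2) (r.1 + r.2 - 1)).filter (fun a => Hmem lt p q a))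
      ((Finset.Icc (r.1 + r.2) (s.1 + s.2 - 1)).filter (fun a => Hmem lt p q a)) := by
    rw [Finset.disjoint_left]
    intro x hx hy
    simp only [Finset.mem_filter, Finset.mem_Icc] at hx hy
    omega
  rw [hU, Finset.card_union_of_disjoint hD] at h3
  push_cast at h3
  omega

theorem aux_step_in (lt : ℤ → ℤ → Prop) (p q r s : Pt) (hr : r ∈ seg lt p q)
    (hs : s ∈ seg lt p q) (a : ℤ) (h1 : r.1 + r.2 = a) (h2 : s.1 + s.2 = a + 1)
    (ha : Hmem lt p q a) : s.1 - r.1 = 1 := by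
  rw [aux_diff lt p q r s hr hs (by omega), h1, h2]
  simp [Finset.filter_singleton, ha]

theorem aux_step_out (lt : ℤ → ℤ → Prop) (p q r s : Pt) (hr : r ∈ seg lt p q)
    (hs : s ∈ seg lt p q) (a : ℤ) (h1 : r.1 + r.2 = a) (h2 : s.1 + s.2 = a + 1)
    (ha : ¬ Hmem lt p q a) : s.1 - r.1 = 0 := by
  rw [aux_diff lt p q r s hr hs (by omega), h1, h2]
  simp [Finset.filter_singleton, ha]

theorem aux_down (lt : ℤ → ℤ → Prop) (hlt : IsStrictTotalOrder ℤ lt) (p q : Pt) (x y : ℤ)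
    (hx : Hmem lt p q x) (hy : y ∈ Ival p q) (hyx : lt y x) : Hmem lt p q y := by
  refine ⟨hy, le_trans ?_ hx.2⟩
  unfold rankLE
  exact_mod_cast Finset.card_le_card (by
    intro z hz
    simp only [Finset.mem_filter] at hz ⊢
    refine ⟨hz.1, Or.inl ?_⟩
    rcases hz.2 with h | h
    · exact _root_.trans h hyx
    · exact h ▸ hyx)

theorem aux_choose (lt : ℤ → ℤ → Prop) (hlt : IsStrictTotalOrder ℤ lt) (p : Pt) (a b C : ℤ)
    (ha : p.1 + p.2 ≤ a) (hb : p.1 + p.2 ≤ b) (haC : a < C) (hbC : b < C) (hab : lt a b) :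
    ∃ q : Pt, Quad1 p q ∧ q.1 + q.2 = C ∧ Hmem lt p q a ∧ ¬ Hmem lt p q b := by
  set J := Finset.Icc (p.1 + p.2) (C - 1) with hJ
  have hk0 : 0 ≤ rankLE lt J a := by unfold rankLE; positivity
  have hk1 : rankLE lt J a ≤ C - (p.1 + p.2) := by
    have h1 : rankLE lt J a ≤ (J.card : ℤ) := by
      unfold rankLE
      exact_mod_cast Finset.card_filter_le _ _
    have h2 : J.card = (C - 1 + 1 - (p.1 + p.2)).toNat := by rw [hJ, Int.card_Icc]
    omega
  have hkb : rankLE lt J a < rankLE lt J b := by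
    unfold rankLE
    have : (J.filter fun y => lt y a ∨ y = a) ⊂ (J.filter fun y => lt y b ∨ y = b) := by
      rw [Finset.ssubset_iff_of_subset]
      · refine ⟨b, ?_, ?_⟩
        · simp only [Finset.mem_filter, or_true, and_true, hJ, Finset.mem_Icc]; omega
        · simp only [Finset.mem_filter, not_and, not_or]
          intro _
          refine ⟨fun h => irrefl (r := lt) a (_root_.trans hab h), fun h => ?_⟩
          rw [h] at hab
          exact irrefl (r := lt) a hab
      · intro z hz
        simp only [Finset.mem_filter] at hz ⊢
        refine ⟨hz.1, Or.inl ?_⟩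
        rcases hz.2 with h | h
        · exact _root_.trans h hab
        · exact h ▸ hab
    exact_mod_cast Finset.card_lt_card this
  refine ⟨(p.1 + rankLE lt J a, C - p.1 - rankLE lt J a), ⟨?_, ?_⟩, ?_, ?_, ?_⟩
  · show p.1 ≤ p.1 + rankLE lt J a
    omega
  · show p.2 ≤ C - p.1 - rankLE lt J a
    omega
  · show p.1 + rankLE lt J a + (C - p.1 - rankLE lt J a) = C
    omega
  all_goals
    have hI : Ival p (p.1 + rankLE lt J a, C - p.1 - rankLE lt J a) = J := by
      unfold Ival
      rw [hJ]
      congr 1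
      show p.1 + _ + (C - p.1 - _) - 1 = C - 1
      ring
    unfold Hmem AmongSmallest
    rw [hI]
  · refine ⟨by rw [hJ, Finset.mem_Icc]; omega, ?_⟩
    show rankLE lt J a ≤ p.1 + rankLE lt J a - p.1
    omega
  · rintro ⟨-, h⟩
    change rankLE lt J b ≤ p.1 + rankLE lt J a - p.1 at h
    omega

theorem aux_conflict (ord : Pt → ℤ → ℤ → Prop)
    (hord : ∀ p : Pt, IsStrictTotalOrder ℤ (ord p)) (hcds : IsCDS (genR ord))
    (hsm : ∀ p q p' q' : Pt, Quad1 p q → Quad1 p' q' →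
        SmoothPair (seg (ord p) p q) (seg (ord p') p' q'))
    (p p' : Pt) (a b : ℤ) (ha : p.1 + p.2 ≤ a) (hb : p.1 + p.2 ≤ b)
    (ha' : p'.1 + p'.2 ≤ a) (hb' : p'.1 + p'.2 ≤ b)
    (h : ord p a b) (h' : ord p' b a) : False := by
  obtain ⟨q, hq, hqC, hqa, hqb⟩ := aux_choose (ord p) (hord p) p a b (max a b + 1)
    ha hb (by omega) (by omega) h
  obtain ⟨q', hq', hqC', hqb', hqa'⟩ := aux_choose (ord p') (hord p') p' b a (max a b + 1)
    hb' ha' (by omega) (by omega) h'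
  obtain ⟨r1, hr1, er1⟩ := aux_exists ord hcds p q hq a (by omega) (by omega)
  obtain ⟨r2, hr2, er2⟩ := aux_exists ord hcds p q hq (a + 1) (by omega) (by omega)
  obtain ⟨r3, hr3, er3⟩ := aux_exists ord hcds p q hq b (by omega) (by omega)
  obtain ⟨r4, hr4, er4⟩ := aux_exists ord hcds p q hq (b + 1) (by omega) (by omega)
  obtain ⟨s1, hs1, es1⟩ := aux_exists ord hcds p' q' hq' a (by omega) (by omega)
  obtain ⟨s2, hs2, es2⟩ := aux_exists ord hcds p' q' hq' (a + 1) (by omega) (by omega)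
  obtain ⟨s3, hs3, es3⟩ := aux_exists ord hcds p' q' hq' b (by omega) (by omega)
  obtain ⟨s4, hs4, es4⟩ := aux_exists ord hcds p' q' hq' (b + 1) (by omega) (by omega)
  have e1 := aux_step_in _ _ _ _ _ hr1 hr2 a er1 er2 hqa
  have e2 := aux_step_out _ _ _ _ _ hr3 hr4 b er3 er4 hqb
  have e3 := aux_step_out _ _ _ _ _ hs1 hs2 a es1 es2 hqa'
  have e4 := aux_step_in _ _ _ _ _ hs3 hs4 b es3 es4 hqb'
  rcases hsm p q p' q' hq hq' with H | H
  · have := H r3 s3 r4 s4 hr3 hs3 hr4 hs4 (by omega) (by omega) (by omega)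
    omega
  · have := H r1 s1 r2 s2 hr1 hs1 hr2 hs2 (by omega) (by omega) (by omega)
    omega

theorem aux_agree (ord : Pt → ℤ → ℤ → Prop)
    (hag : ∀ p p' : Pt, Agree p p' (ord p) (ord p')) (p p' : Pt) (a b : ℤ)
    (ha : p.1 + p.2 ≤ a) (hb : p.1 + p.2 ≤ b)
    (ha' : p'.1 + p'.2 ≤ a) (hb' : p'.1 + p'.2 ≤ b) : ord p a b ↔ ord p' a b := by
  have key : ∀ m t : Pt, m.1 ≤ t.1 → m.2 ≤ t.2 → t.1 + t.2 ≤ a → t.1 + t.2 ≤ b →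
      (ord m a b ↔ ord t a b) := by
    intro m t h1 h2 h3 h4
    refine hag m t a b ?_ ?_ <;> rw [max_eq_right h1, max_eq_right h2] <;> assumption
  exact (key (min p.1 p'.1, min p.2 p'.2) p (min_le_left _ _) (min_le_left _ _) ha hb).symm.trans
    (key (min p.1 p'.1, min p.2 p'.2) p' (min_le_right _ _) (min_le_right _ _) ha' hb')

theorem aux_mono (lt lt' : ℤ → ℤ → Prop) (p q p' q' r1 s1 r2 s2 : Pt)
    (hr1 : r1 ∈ seg lt p q) (hs1 : s1 ∈ seg lt' p' q')
    (hr2 : r2 ∈ seg lt p q) (hs2 : s2 ∈ seg lt' p' q')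
    (e1 : r1.1 + r1.2 = s1.1 + s1.2) (e2 : r2.1 + r2.2 = s2.1 + s2.2)
    (hle : r1.1 + r1.2 ≤ r2.1 + r2.2)
    (hsub : ∀ a, p.1 + p.2 ≤ a → p'.1 + p'.2 ≤ a → a < q.1 + q.2 → a < q'.1 + q'.2 →
      Hmem lt p q a → Hmem lt' p' q' a) : r2.1 - r1.1 ≤ s2.1 - s1.1 := by
  rw [aux_diff lt p q r1 r2 hr1 hr2 hle, aux_diff lt' p' q' s1 s2 hs1 hs2 (by omega), e1, e2]
  obtain ⟨-, -, -, -, h1, -, -⟩ := hr1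
  obtain ⟨-, -, -, -, h2, -, -⟩ := hs1
  obtain ⟨-, -, -, -, -, h3, -⟩ := hr2
  obtain ⟨-, -, -, -, -, h4, -⟩ := hs2
  exact_mod_cast Finset.card_le_card (by
    intro z hz
    simp only [Finset.mem_filter, Finset.mem_Icc] at hz ⊢
    exact ⟨hz.1, hsub z (by omega) (by omega) (by omega) (by omega) hz.2⟩)

/-- Lemma 4: a CDS generated by an assignment of linear orders is a smooth
grid geometry (every two segments are smooth) iff all pairs of assigned orders are in
agreement. -/
theorem statement10 (ord : Pt → ℤ → ℤ → Prop)
    (hord : ∀ p : Pt, IsStrictTotalOrder ℤ (ord p))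
    (hcds : IsCDS (genR ord)) :
    (∀ p q p' q' : Pt, Quad1 p q → Quad1 p' q' →
        SmoothPair (seg (ord p) p q) (seg (ord p') p' q')) ↔
      (∀ p p' : Pt, Agree p p' (ord p) (ord p')) := by
  constructor
  · intro hsm p p' a b ha hb
    have key : ∀ p p' : Pt, p.1 + p.2 ≤ a → p.1 + p.2 ≤ b → p'.1 + p'.2 ≤ a → p'.1 + p'.2 ≤ b →
        ord p a b → ord p' a b := by
      intro p p' h1 h2 h3 h4 h
      haveI := hord p
      haveI := hord p'
      rcases trichotomous_of (ord p') a b with h' | h' | h'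
      · exact h'
      · rw [h'] at h
        exact absurd h (irrefl (r := ord p) b)
      · exact (aux_conflict ord hord hcds hsm p p' a b h1 h2 h3 h4 h h').elim
    exact ⟨key p p' (by omega) (by omega) (by omega) (by omega),
      key p' p (by omega) (by omega) (by omega) (by omega)⟩
  · intro hag p q p' q' _ _
    by_cases hex : ∀ a, p.1 + p.2 ≤ a → p'.1 + p'.2 ≤ a → a < q.1 + q.2 → a < q'.1 + q'.2 →
      Hmem (ord p) p q a → Hmem (ord p') p' q' a
    · right
      intro r1 s1 r2 s2 hr1 hs1 hr2 hs2 e1 e2 hle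
      have := aux_mono _ _ p q p' q' r1 s1 r2 s2 hr1 hs1 hr2 hs2 e1 e2 hle hex
      omega
    · left
      push Not at hex
      obtain ⟨a, ha1, ha2, ha3, ha4, haH, haH'⟩ := hex
      intro r1 s1 r2 s2 hr1 hs1 hr2 hs2 e1 e2 hle
      have := aux_mono _ _ p' q' p q s1 r1 s2 r2 hs1 hr1 hs2 hr2 e1.symm e2.symm (by omega) (by
        intro b hb1 hb2 hb3 hb4 hbH'
        by_contra hbH
        haveI := hord p
        have hbI : b ∈ Ival p q := by unfold Ival; rw [Finset.mem_Icc]; omega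
        have haI' : a ∈ Ival p' q' := by unfold Ival; rw [Finset.mem_Icc]; omega
        rcases trichotomous_of (ord p) a b with h | h | h
        · exact haH' (aux_down (ord p') (hord p') p' q' b a hbH' haI'
            ((aux_agree ord hag p p' a b ha1 hb2 ha2 hb1).1 h))
        · exact hbH (h ▸ haH)
        · exact hbH (aux_down (ord p) (hord p) p q a b haH hbI h))
      omega
end

section
/- Let p, p' ∈ ℤ² with p.y < 0 and p'.y ≥ 0, and let ≺_p, ≺_{p'} be the waterline orders assigned to p and p'. Then no two integers form a bad pair for (≺_p, p) and (≺_{p'}, p'). -/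
open scoped Classical

lemma rankLE_above (p' : Pt) (h' : 0 ≤ p'.2) (s C a : ℤ) (h1 : s ≤ a) (h2 : a ≤ C - 1) :
    rankLE (waterOrd p') (Finset.Icc s (C - 1)) a = a - s + 1 := by
  have : ((Finset.Icc s (C - 1)).filter fun y => waterOrd p' y a ∨ y = a) = Finset.Icc s a := by
    ext y
    simp only [Finset.mem_filter, Finset.mem_Icc, waterOrd, if_pos h']
    omega
  rw [rankLE, this, Int.card_Icc]
  omega

lemma rankLE_below_ge (p : Pt) (h : p.2 < 0) (C a : ℤ) (h1 : p.1 ≤ a) (h2 : a ≤ C - 1) :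
    rankLE (waterOrd p) (Finset.Icc (p.1 + p.2) (C - 1)) a = a - p.1 + 1 := by
  have : ((Finset.Icc (p.1 + p.2) (C - 1)).filter fun y => waterOrd p y a ∨ y = a)
      = Finset.Icc p.1 a := by
    ext y
    simp only [Finset.mem_filter, Finset.mem_Icc, waterOrd, if_neg (not_le.mpr h)]
    omega
  rw [rankLE, this, Int.card_Icc]
  omega

lemma rankLE_below_lt (p : Pt) (h : p.2 < 0) (C a : ℤ) (h0 : p.1 + p.2 ≤ a)
    (h1 : a < p.1) (h2 : a ≤ C - 1) :
    rankLE (waterOrd p) (Finset.Icc (p.1 + p.2) (C - 1)) a = C - a := by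
  have : ((Finset.Icc (p.1 + p.2) (C - 1)).filter fun y => waterOrd p y a ∨ y = a)
      = Finset.Icc a (C - 1) := by
    ext y
    simp only [Finset.mem_filter, Finset.mem_Icc, waterOrd, if_neg (not_le.mpr h)]
    omega
  rw [rankLE, this, Int.card_Icc]
  omega

/-- a waterline order at a point below the waterline and one at a point on
or above the waterline have no bad pair. -/
theorem statement12 (p p' : Pt) (h : p.2 < 0) (h' : 0 ≤ p'.2) :
    ∀ a b : ℤ, ¬ BadPairSym (waterOrd p) (waterOrd p') p p' a b := by
  intro a b hb
  rcases hb with ⟨hx, hne, C, l, h1, h2, ha, hb, ha', hb', ⟨_, r1⟩, r2, ⟨_, r3⟩, r4⟩ |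
    ⟨hx, hne, C, l, h1, h2, ha', hb', ha, hb, ⟨_, r1⟩, r2, ⟨_, r3⟩, r4⟩
  all_goals
    replace r2 := not_le.mp fun t => r2 ⟨by assumption, t⟩
    replace r4 := not_le.mp fun t => r4 ⟨by assumption, t⟩
    rw [Finset.mem_Icc] at ha hb ha' hb'
    have ea := rankLE_above p' h' _ C a ha'.1 ha'.2
    have eb := rankLE_above p' h' _ C b hb'.1 hb'.2
    have fa := fun t => rankLE_below_ge p h C a t ha.2
    have fb := fun t => rankLE_below_ge p h C b t hb.2
    have ga := fun t => rankLE_below_lt p h C a ha.1 t ha.2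
    have gb := fun t => rankLE_below_lt p h C b hb.1 t hb.2
    rcases le_or_gt p.1 a with ta | ta <;> rcases le_or_gt p.1 b with tb | tb <;>
    first
    | (have := fa ta; have := fb tb; omega)
    | (have := fa ta; have := gb tb; omega)
    | (have := ga ta; have := fb tb; omega)
    | (have := ga ta; have := gb tb; omega)
end

section
/- For every pair of points p, p' ∈ ℤ², the waterline orders ≺_p and ≺_{p'} have no bad pair; that is, no two integers form a bad pair for (≺_p, p) and (≺_{p'}, p'). -/
open scoped Classical

theorem rank_water (p : Pt) (C a : ℤ) (h1 : p.1 + p.2 ≤ a) (h2 : a ≤ C - 1) :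
    rankLE (waterOrd p) (Finset.Icc (p.1 + p.2) (C - 1)) a =
      if 0 ≤ p.2 then a - (p.1 + p.2) + 1 else if p.1 ≤ a then a - p.1 + 1 else C - a := by
  obtain ⟨x, y⟩ := p
  simp only at h1 h2 ⊢
  unfold rankLE
  split_ifs with hy hx
  · have : (Finset.Icc (x + y) (C - 1)).filter (fun z => waterOrd (x, y) z a ∨ z = a)
        = Finset.Icc (x + y) a := by
      ext z
      simp only [Finset.mem_filter, Finset.mem_Icc, waterOrd, hy, if_true]
      omega
    rw [this, Int.card_Icc]
    omega
  · have : (Finset.Icc (x + y) (C - 1)).filter (fun z => waterOrd (x, y) z a ∨ z = a)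
        = Finset.Icc x a := by
      ext z
      simp only [Finset.mem_filter, Finset.mem_Icc, waterOrd, hy, if_false]
      omega
    rw [this, Int.card_Icc]
    omega
  · have : (Finset.Icc (x + y) (C - 1)).filter (fun z => waterOrd (x, y) z a ∨ z = a)
        = Finset.Icc a (C - 1) := by
      ext z
      simp only [Finset.mem_filter, Finset.mem_Icc, waterOrd, hy, if_false]
      omega
    rw [this, Int.card_Icc]
    omega

theorem no_bad (p p' : Pt) (h : p.1 ≤ p'.1) (a b : ℤ) :
    ¬ BadPair (waterOrd p) (waterOrd p') p p' a b := by
  rintro ⟨hab, C, l, h1, h2, ha, hb, ha', hb', ⟨_, r1⟩, r2, ⟨_, r3⟩, r4⟩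
  have r2' := fun h => r2 ⟨hb, h⟩
  have r4' := fun h => r4 ⟨ha', h⟩
  clear r2 r4
  replace r2' := not_le.1 r2'
  replace r4' := not_le.1 r4'
  rw [Finset.mem_Icc] at ha hb ha' hb'
  rw [rank_water _ _ _ ha.1 ha.2] at r1
  rw [rank_water _ _ _ hb.1 hb.2] at r2'
  rw [rank_water _ _ _ hb'.1 hb'.2] at r3
  rw [rank_water _ _ _ ha'.1 ha'.2] at r4'
  obtain ⟨x, y⟩ := p
  obtain ⟨x', y'⟩ := p'
  simp only at *
  split_ifs at * <;> omega

/-- no two waterline orders have a bad pair. -/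
theorem statement13 (p p' : Pt) :
    ∀ a b : ℤ, ¬ BadPairSym (waterOrd p) (waterOrd p') p p' a b := by
  rintro a b (⟨h, hb⟩ | ⟨h, hb⟩)
  · exact no_bad p p' h a b hb
  · exact no_bad p' p h a b hb
end
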